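/- Let Ω ⊂ ℝⁿ be an open bounded set with the Lebesgue measure, let (X,d) be a locally compact Hadamard space, and let p ∈ [1,∞). For every Lebesgue-measurable f : Ω → X with ∫_Ω d(f(ω),a)^p dω < ∞ for some a ∈ X, and every ε > 0, there exists a uniformly continuous map h : Ω → X which is constant outside a compact subset of Ω and satisfies ∫_Ω d(f(ω),h(ω))^p dω < ε. -/

import Mathlib

open MeasureTheory Set

open Filter TopologicalSpace
open scoped Topology ENNReal

/-! A connected, locally compact metric space is σ-compact, hence separable, so `f` is strongly
measurable and can be replaced by a simple function `g`. The finitely many values of `g` lie,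
together with `a`, in one compact path-connected set `T`. Each fibre of `g` over a value `x ≠ a`
has finite measure and is trapped, up to small measure, between a compact set `K` and an open set
`V ⊆ Ω`; running along a path from `a` to `x` in `T` with a Urysohn function of the pair `(K, V)`
as parameter gives a continuous map. The resulting `h` takes its values in `T`, is constantly `a`
off a compact set, and differs from `g` only on a set of small measure, where the error is at most
`diam T`: since `T` does not depend on the choice of `K` and `V`, the integral is small. -/

section SigmaCompact

variable {X : Type*} [TopologicalSpace X]

theorem exists_locallyFinite_cover_isCompact_closure (X : Type*) [TopologicalSpace X] [R1Space X]
    [WeaklyLocallyCompactSpace X] [ParacompactSpace X] :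
    ∃ V : X → Set X, (∀ i, IsOpen (V i)) ∧ ⋃ i, V i = univ ∧ LocallyFinite V ∧
      ∀ i, IsCompact (closure (V i)) := by
  choose N hNc hN using fun x : X ↦ exists_compact_mem_nhds x
  obtain ⟨V, hVo, hVc, hVf, hVN⟩ := precise_refinement (fun x ↦ interior (N x))
    (fun _ ↦ isOpen_interior)
    (iUnion_eq_univ_iff.2 fun x ↦ ⟨x, mem_interior_iff_mem_nhds.2 (hN x)⟩)
  exact ⟨V, hVo, hVc, hVf, fun i ↦ (hNc i).closure_of_subset ((hVN i).trans interior_subset)⟩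

theorem exists_compacts_star_subset_of_locallyFinite {ι : Type*} {V : ι → Set X}
    (hV : LocallyFinite V) (hVc : ∀ i, IsCompact (closure (V i))) (s : Compacts X) :
    ∃ t : Compacts X, ∀ i, (V i ∩ s).Nonempty → V i ⊆ t :=
  ⟨⟨⋃ i ∈ {i | (V i ∩ s).Nonempty}, closure (V i),
    (hV.finite_nonempty_inter_compact s.isCompact).isCompact_biUnion fun i _ ↦ hVc i⟩,
    fun _ hi ↦ subset_closure.trans (subset_biUnion_of_mem (u := fun i ↦ closure (V i)) hi)⟩

theorem sigmaCompactSpace_of_preconnectedSpace_of_paracompactSpace [R1Space X]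
    [WeaklyLocallyCompactSpace X] [PreconnectedSpace X] [ParacompactSpace X] :
    SigmaCompactSpace X := by
  obtain hX | ⟨⟨a⟩⟩ := isEmpty_or_nonempty X
  · infer_instance
  obtain ⟨V, hVo, hVu, hVf, hVc⟩ := exists_locallyFinite_cover_isCompact_closure X
  choose star hstar using exists_compacts_star_subset_of_locallyFinite hVf hVc
  let K (n : ℕ) : Compacts X := star^[n] {a}
  have mem_of_mem {i : X} {x y : X} (hx : x ∈ V i) (hy : y ∈ V i) (hxK : x ∈ ⋃ n, (K n : Set X)) :
      y ∈ ⋃ n, (K n : Set X) := by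
    obtain ⟨n, hn⟩ := mem_iUnion.1 hxK
    refine mem_iUnion.2 ⟨n + 1, ?_⟩
    rw [show K (n + 1) = star (K n) from Function.iterate_succ_apply' star n {a}]
    exact hstar (K n) i ⟨x, hx, hn⟩ hy
  have mem_of_mem_univ : ∀ x y, x ∈ ⋃ n, (K n : Set X) → y ∈ ⋃ n, (K n : Set X) := by
    refine PreconnectedSpace.induction₂' _ (fun x ↦ ?_) ⟨fun _ _ _ hxy hyz ↦ hyz ∘ hxy⟩
    obtain ⟨i, hi⟩ := iUnion_eq_univ_iff.1 hVu x
    filter_upwards [(hVo i).mem_nhds hi] with y hy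
    exact ⟨mem_of_mem hi hy, mem_of_mem hy hi⟩
  have haK : a ∈ ⋃ n, (K n : Set X) := mem_iUnion.2 ⟨0, mem_singleton a⟩
  exact isSigmaCompact_univ_iff.1 (eq_univ_of_forall (mem_of_mem_univ a · haK) ▸
    isSigmaCompact_iUnion_of_isCompact _ fun n ↦ (K n).isCompact)

end SigmaCompact

section PathConnected

theorem pathConnectedSpace_of_forall_geodesic {X : Type*} [PseudoMetricSpace X] (hX : Nonempty X)
    (hgeo : ∀ x y : X, ∃ γ : ℝ → X, γ 0 = x ∧ γ 1 = y ∧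
      ∀ s ∈ Icc (0 : ℝ) 1, ∀ t ∈ Icc (0 : ℝ) 1, dist (γ s) (γ t) = |s - t| * dist x y) :
    PathConnectedSpace X where
  nonempty := hX
  joined x y := by
    obtain ⟨γ, h0, h1, hγ⟩ := hgeo x y
    have hlip : LipschitzOnWith (nndist x y) γ (Icc 0 1) :=
      LipschitzOnWith.of_dist_le_mul fun s hs t ht ↦ by
        rw [hγ s hs t ht, Real.dist_eq, mul_comm, coe_nndist]
    exact (JoinedIn.ofLine hlip.continuousOn h0 h1 (subset_univ _)).joined

theorem exists_isCompact_isPathConnected_superset_of_finite {X : Type*} [TopologicalSpace X]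
    [PathConnectedSpace X] {s : Set X} (hs : s.Finite) :
    ∃ T, s ⊆ T ∧ IsCompact T ∧ IsPathConnected T := by
  induction s, hs using Set.Finite.induction_on with
  | empty =>
    obtain ⟨x⟩ := PathConnectedSpace.nonempty (X := X)
    exact ⟨{x}, empty_subset _, isCompact_singleton, isPathConnected_singleton x⟩
  | @insert y s _ _ ih =>
    obtain ⟨T, hsT, hTc, hT⟩ := ih
    obtain ⟨x, hx⟩ := hT.nonempty
    let γ : Path x y := PathConnectedSpace.somePath x y
    have hγ : IsPathConnected (range γ) :=
      γ.extend_range ▸ isPathConnected_range γ.continuous_extend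
    exact ⟨T ∪ range γ, insert_subset (.inr γ.target_mem_range) (hsT.trans subset_union_left),
      hTc.union (isCompact_range γ.continuous),
      hT.union hγ ⟨x, hx, γ.source_mem_range⟩⟩

end PathConnected

/-- `h` is a compactly supported perturbation, inside `U`, of the constant map `a`: it is
continuous and equals `a` outside a compact subset of `U`. For maps into a space without a
distinguished zero this replaces continuous functions with compact support in `U`; the support is
encoded, as in `tsupport`, as the closure of the set where `h` differs from `a`. -/
structure IsCompactPerturbation {E X : Type*} [TopologicalSpace E] [TopologicalSpace X]
    (a : X) (U : Set E) (h : E → X) : Prop where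
  continuous : Continuous h
  isCompact_closure : IsCompact (closure {ω | h ω ≠ a})
  closure_subset : closure {ω | h ω ≠ a} ⊆ U

theorem eq_of_notMem_closure_setOf_ne {E X : Type*} [TopologicalSpace E] {a : X} {h : E → X}
    {ω : E} (hω : ω ∉ closure {ω | h ω ≠ a}) : h ω = a :=
  not_not.1 fun hne ↦ hω (subset_closure hne)

namespace IsCompactPerturbation

variable {E X : Type*} [TopologicalSpace E] [TopologicalSpace X] {a x : X} {U U₁ U₂ K : Set E}
  {h h₁ h₂ : E → X}

theorem eq_of_notMem (hh : IsCompactPerturbation a U h) {ω : E} (hω : ω ∉ U) : h ω = a :=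
  eq_of_notMem_closure_setOf_ne fun hmem ↦ hω (hh.closure_subset hmem)

theorem mono (hh : IsCompactPerturbation a U₁ h) (hU : U₁ ⊆ U₂) : IsCompactPerturbation a U₂ h :=
  ⟨hh.continuous, hh.isCompact_closure, hh.closure_subset.trans hU⟩

theorem const (a : X) (U : Set E) : IsCompactPerturbation a U (fun _ ↦ a) :=
  ⟨continuous_const, by simp, by simp⟩

theorem piecewise [DecidablePred (· ∈ U₁)] (hh₁ : IsCompactPerturbation a U₁ h₁)
    (hh₂ : IsCompactPerturbation a U₂ h₂) (hU₁ : IsOpen U₁) (hU : Disjoint U₁ U₂) :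
    IsCompactPerturbation a (U₁ ∪ U₂) (U₁.piecewise h₁ h₂) := by
  have hclosure : closure {ω | U₁.piecewise h₁ h₂ ω ≠ a} ⊆
      closure {ω | h₁ ω ≠ a} ∪ closure {ω | h₂ ω ≠ a} := by
    rw [← closure_union]
    refine closure_mono fun ω hω ↦ ?_
    by_cases hωU : ω ∈ U₁
    · exact .inl (by simpa [hωU] using hω)
    · exact .inr (by simpa [hωU] using hω)
  refine ⟨continuous_iff_continuousAt.2 fun ω ↦ ?_,
    (hh₁.isCompact_closure.union hh₂.isCompact_closure).of_isClosed_subset isClosed_closure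
      hclosure,
    hclosure.trans (union_subset_union hh₁.closure_subset hh₂.closure_subset)⟩
  by_cases hω : ω ∈ closure {ω | h₁ ω ≠ a}
  · refine hh₁.continuous.continuousAt.congr ?_
    filter_upwards [hU₁.mem_nhds (hh₁.closure_subset hω)] with z hz
    exact (piecewise_eq_of_mem _ _ _ hz).symm
  · refine hh₂.continuous.continuousAt.congr ?_
    filter_upwards [isClosed_closure.isOpen_compl.mem_nhds hω] with z hz
    by_cases hzU : z ∈ U₁
    · rw [piecewise_eq_of_mem _ _ _ hzU, hh₂.eq_of_notMem (disjoint_left.1 hU hzU)]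
      exact (eq_of_notMem_closure_setOf_ne hz).symm
    · exact (piecewise_eq_of_notMem _ _ _ hzU).symm

theorem exists_eqOn_of_joinedIn [R1Space E] [LocallyCompactSpace E] {T : Set X}
    (hax : JoinedIn T a x) (hK : IsCompact K) (hU : IsOpen U) (hKU : K ⊆ U) :
    ∃ h, IsCompactPerturbation a U h ∧ (∀ ω, h ω ∈ T) ∧ ∀ ω ∈ K, h ω = x := by
  obtain ⟨γ, hγT⟩ := hax
  obtain ⟨φ, hφ1, hφc, hφU, -⟩ := exists_continuousMap_one_of_isCompact_subset_isOpen hK hU hKU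
  have hsupp : closure {ω | γ.extend (φ ω) ≠ a} ⊆ tsupport φ :=
    closure_mono fun ω hω hφ0 ↦ hω (by rw [hφ0, γ.extend_zero])
  refine ⟨fun ω ↦ γ.extend (φ ω),
    ⟨γ.continuous_extend.comp φ.continuous, hφc.of_isClosed_subset isClosed_closure hsupp,
      hsupp.trans hφU⟩, fun ω ↦ ?_, fun ω hω ↦ ?_⟩
  · exact hγT _
  · simp only [hφ1 hω, Pi.one_apply, γ.extend_one]

theorem exists_eqOn_finset [R1Space E] [LocallyCompactSpace E] {T : Set X}
    (hT : IsPathConnected T) (ha : a ∈ T) {ι : Type*} {s : Finset ι} {x : ι → X} {K : ι → Set E}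
    (hx : ∀ i ∈ s, x i ∈ T) (hK : ∀ i ∈ s, IsCompact (K i)) (hKcl : ∀ i ∈ s, IsClosed (K i))
    (hd : (s : Set ι).PairwiseDisjoint K) (hU : IsOpen U) (hKU : ∀ i ∈ s, K i ⊆ U) :
    ∃ h, IsCompactPerturbation a U h ∧ (∀ ω, h ω ∈ T) ∧ ∀ i ∈ s, ∀ ω ∈ K i, h ω = x i := by
  classical
  induction s using Finset.induction_on generalizing U with
  | empty => exact ⟨fun _ ↦ a, const a U, fun _ ↦ ha, by simp⟩
  | insert j s hj ih =>
    simp only [Finset.forall_mem_insert] at hx hK hKcl hKU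
    rw [Finset.coe_insert, pairwiseDisjoint_insert_of_notMem (mod_cast hj)] at hd
    obtain ⟨U₁, U₂, hU₁, hU₂, hj₁, hs₂, hU₁₂⟩ : SeparatedNhds (K j) (⋃ i ∈ s, K i) :=
      .of_isCompact_isCompact_isClosed hK.1 (s.isCompact_biUnion hK.2)
        (s.finite_toSet.isClosed_biUnion hKcl.2) (disjoint_iUnion₂_right.2 hd.2)
    have hK₂ : ∀ i ∈ s, K i ⊆ U₂ := iUnion₂_subset_iff.1 hs₂
    obtain ⟨h₁, hh₁, hT₁, hK₁⟩ := exists_eqOn_of_joinedIn (hT.joinedIn a ha (x j) hx.1) hK.1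
      (hU.inter hU₁) (subset_inter hKU.1 hj₁)
    obtain ⟨h₂, hh₂, hT₂, hx₂⟩ := ih hx.2 hK.2 hKcl.2 hd.1 (hU.inter hU₂)
      fun i hi ↦ subset_inter (hKU.2 i hi) (hK₂ i hi)
    have hUU : Disjoint (U ∩ U₁) (U ∩ U₂) := hU₁₂.mono inter_subset_right inter_subset_right
    refine ⟨(U ∩ U₁).piecewise h₁ h₂, (hh₁.piecewise hh₂ (hU.inter hU₁) hUU).mono
      (union_subset inter_subset_left inter_subset_left), fun ω ↦ ?_, ?_⟩
    · by_cases hω : ω ∈ U ∩ U₁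
      · simpa only [piecewise_eq_of_mem _ _ _ hω] using hT₁ ω
      · simpa only [piecewise_eq_of_notMem _ _ _ hω] using hT₂ ω
    · rw [Finset.forall_mem_insert]
      refine ⟨fun ω hω ↦ ?_, fun i hi ω hω ↦ ?_⟩
      · have hωU₁ : ω ∈ U ∩ U₁ := ⟨hKU.1 hω, hj₁ hω⟩
        rw [piecewise_eq_of_mem _ _ _ hωU₁, hK₁ ω hω]
      · have hωU₁ : ω ∉ U ∩ U₁ := fun hωU ↦ disjoint_left.1 hU₁₂ hωU.2 (hK₂ i hi hω)
        rw [piecewise_eq_of_notMem _ _ _ hωU₁, hx₂ i hi ω hω]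

theorem setOf_ne_inter_subset_biUnion_sdiff {s : Set X} {K V : X → Set E}
    (hh : IsCompactPerturbation a (⋃ x ∈ s, V x) h) (hhK : ∀ x ∈ s, ∀ ω ∈ K x, h ω = x) {g : E → X}
    (hgs : ∀ ω, g ω ≠ a → g ω ∈ s) (hKg : ∀ x ∈ s, K x ⊆ g ⁻¹' {x})
    (hgV : ∀ x ∈ s, g ⁻¹' {x} ∩ U ⊆ V x) : {ω | g ω ≠ h ω} ∩ U ⊆ ⋃ x ∈ s, V x \ K x := by
  rintro ω ⟨hne, hωU⟩
  by_cases hωV : ω ∈ ⋃ x ∈ s, V x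
  · obtain ⟨x, hx, hωx⟩ := mem_iUnion₂.1 hωV
    refine mem_biUnion hx ⟨hωx, fun hωK ↦ hne ?_⟩
    rw [hhK x hx ω hωK]
    exact hKg x hx hωK
  · have hgω : g ω ∈ s := hgs ω fun hga ↦ hne (hga.trans (hh.eq_of_notMem hωV).symm)
    exact absurd (mem_biUnion hgω (hgV _ hgω ⟨rfl, hωU⟩)) hωV

end IsCompactPerturbation

theorem IsCompactPerturbation.uniformContinuous {E X : Type*} [UniformSpace E] [UniformSpace X]
    {a : X} {U : Set E} {h : E → X} (hh : IsCompactPerturbation a U h) : UniformContinuous h := by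
  refine hh.continuous.uniformContinuous_of_tendsto_cocompact (x := a)
    (tendsto_const_nhds.congr' ?_)
  filter_upwards [hh.isCompact_closure.compl_mem_cocompact] with ω hω
  exact (eq_of_notMem_closure_setOf_ne hω).symm

section Approximation

variable {E X : Type*} [MeasurableSpace E] {μ : Measure E} {a : X} {p : ℝ}

theorem exists_simpleFunc_lintegral_edist_lt [PseudoMetricSpace X] (hp : 0 < p) {f : E → X}
    (hf : AEStronglyMeasurable f μ) (hfa : ∫⁻ ω, edist (f ω) a ^ p ∂μ ≠ ∞) {δ : ℝ≥0∞}
    (hδ : δ ≠ 0) : ∃ g : SimpleFunc E X, ∫⁻ ω, edist (f ω) (g ω) ^ p ∂μ < δ := by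
  borelize X
  have := hf.stronglyMeasurable_mk.separableSpace_range_union_singleton (b := a)
  have ha : a ∈ range (hf.mk f) ∪ {a} := .inr rfl
  let g (n : ℕ) : SimpleFunc E X :=
    SimpleFunc.approxOn (hf.mk f) hf.stronglyMeasurable_mk.measurable _ a ha n
  have hlim : Tendsto (fun n ↦ ∫⁻ ω, edist (f ω) (g n ω) ^ p ∂μ) atTop (𝓝 (∫⁻ _, 0 ∂μ)) := by
    refine tendsto_lintegral_of_dominated_convergence' (fun ω ↦ edist (f ω) a ^ p)
      (fun n ↦ (hf.edist (g n).aestronglyMeasurable).pow_const p) (fun n ↦ ?_) hfa ?_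
    · filter_upwards [hf.ae_eq_mk] with ω hω
      gcongr
      rw [hω, edist_comm, edist_comm _ a]
      exact SimpleFunc.edist_approxOn_le _ ha ω n
    · filter_upwards [hf.ae_eq_mk] with ω hω
      have hgω : Tendsto (g · ω) atTop (𝓝 (f ω)) :=
        hω ▸ SimpleFunc.tendsto_approxOn _ ha (subset_closure (.inl (mem_range_self ω)))
      simpa [ENNReal.zero_rpow_of_pos hp] using
        ((tendsto_const_nhds (x := f ω)).edist hgω).ennrpow_const p
  rw [lintegral_zero] at hlim
  obtain ⟨n, hn⟩ := (hlim.eventually_lt_const (pos_iff_ne_zero.2 hδ)).exists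
  exact ⟨g n, hn⟩

theorem measure_fiber_ne_top_of_lintegral_edist_ne_top [MetricSpace X] {g : E → X}
    (hg : ∫⁻ ω, edist (g ω) a ^ p ∂μ ≠ ∞) {x : X} (hgx : MeasurableSet (g ⁻¹' {x})) (hx : x ≠ a) :
    μ (g ⁻¹' {x}) ≠ ∞ := by
  have hle : edist x a ^ p * μ (g ⁻¹' {x}) ≤ ∫⁻ ω, edist (g ω) a ^ p ∂μ :=
    calc edist x a ^ p * μ (g ⁻¹' {x})
        = ∫⁻ ω in g ⁻¹' {x}, edist (g ω) a ^ p ∂μ := by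
          rw [← setLIntegral_const]
          exact setLIntegral_congr_fun hgx fun ω hω ↦ by rw [mem_singleton_iff.1 hω]
      _ ≤ ∫⁻ ω, edist (g ω) a ^ p ∂μ := setLIntegral_le_lintegral _ _
  exact (ENNReal.lt_top_of_mul_ne_top_right (ne_top_of_le_ne_top hg hle)
    (ENNReal.rpow_pos (edist_pos.2 hx) (edist_ne_top x a)).ne').ne

theorem lintegral_edist_rpow_le [PseudoMetricSpace X] (hp : 0 ≤ p) {f g h : E → X}
    (hf : AEStronglyMeasurable f μ) (hg : AEStronglyMeasurable g μ) :
    ∫⁻ ω, edist (f ω) (h ω) ^ p ∂μ ≤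
      2 ^ p * (∫⁻ ω, edist (f ω) (g ω) ^ p ∂μ + ∫⁻ ω, edist (g ω) (h ω) ^ p ∂μ) :=
  calc ∫⁻ ω, edist (f ω) (h ω) ^ p ∂μ
      ≤ ∫⁻ ω, 2 ^ p * (edist (f ω) (g ω) ^ p + edist (g ω) (h ω) ^ p) ∂μ :=
        lintegral_mono fun ω ↦ (by gcongr; exact edist_triangle _ _ _ :
          edist (f ω) (h ω) ^ p ≤ (edist (f ω) (g ω) + edist (g ω) (h ω)) ^ p).trans
            (ENNReal.add_rpow_le_two_rpow_mul_rpow_add_rpow _ _ hp)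
    _ = 2 ^ p * (∫⁻ ω, edist (f ω) (g ω) ^ p ∂μ + ∫⁻ ω, edist (g ω) (h ω) ^ p ∂μ) := by
        rw [lintegral_const_mul' _ _ (ENNReal.rpow_ne_top_of_nonneg hp ENNReal.ofNat_ne_top),
          lintegral_add_left' ((hf.edist hg).pow_const p)]

variable [TopologicalSpace E] [R1Space E] [BorelSpace E] [μ.Regular] {U : Set E}

theorem exists_isCompact_isOpen_measure_diff_lt {A : Set E} (hA : MeasurableSet A)
    (hμA : μ A ≠ ∞) (hU : IsOpen U) (hAU : A ⊆ U) {η : ℝ≥0∞} (hη : η ≠ 0) :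
    ∃ K V, IsCompact K ∧ IsClosed K ∧ IsOpen V ∧ K ⊆ A ∧ A ⊆ V ∧ V ⊆ U ∧ μ (V \ K) < η := by
  have hη2 : η / 2 ≠ 0 := (ENNReal.half_pos hη).ne'
  obtain ⟨K, hKA, hK, hKcl, hμK⟩ := hA.exists_isCompact_isClosed_sdiff_lt hμA hη2
  obtain ⟨V, hAV, hV, -, hμV⟩ := hA.exists_isOpen_sdiff_lt hμA hη2
  refine ⟨K, V ∩ U, hK, hKcl, hV.inter hU, hKA, subset_inter hAV hAU, inter_subset_right, ?_⟩
  calc μ ((V ∩ U) \ K) ≤ μ ((V \ A) ∪ (A \ K)) :=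
        measure_mono ((sdiff_subset_sdiff_left inter_subset_left).trans (sdiff_triangle V A K))
    _ ≤ μ (V \ A) + μ (A \ K) := measure_union_le _ _
    _ < η / 2 + η / 2 := ENNReal.add_lt_add hμV hμK
    _ = η := ENNReal.add_halves η

variable [LocallyCompactSpace E]

theorem exists_isCompactPerturbation_measure_ne_lt [TopologicalSpace X] {T : Set X}
    (hT : IsPathConnected T) (ha : a ∈ T) (hU : IsOpen U) {g : SimpleFunc E X}
    (hgT : ∀ ω, g ω ∈ T) (hg : ∀ x ≠ a, μ.restrict U (g ⁻¹' {x}) ≠ ∞) {η : ℝ≥0∞} (hη : η ≠ 0) :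
    ∃ h, IsCompactPerturbation a U h ∧ (∀ ω, h ω ∈ T) ∧
      μ.restrict U {ω | g ω ≠ h ω} < η := by
  classical
  let s : Finset X := g.range.erase a
  obtain ⟨ζ, hζ, hζη⟩ := ENNReal.exists_pos_mul_lt (ENNReal.natCast_ne_top s.card) hη
  have hKV (x : X) (hx : x ∈ s) : ∃ K V, IsCompact K ∧ IsClosed K ∧ IsOpen V ∧
      K ⊆ g ⁻¹' {x} ∩ U ∧ g ⁻¹' {x} ∩ U ⊆ V ∧ V ⊆ U ∧ μ (V \ K) < ζ :=
    exists_isCompact_isOpen_measure_diff_lt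
      ((g.measurableSet_fiber x).inter hU.measurableSet)
      (Measure.restrict_apply (μ := μ) (s := U) (g.measurableSet_fiber x) ▸
        hg x (Finset.ne_of_mem_erase hx)) hU inter_subset_right hζ.ne'
  choose! K V hK hKcl hV hKg hgV hVU hμ using hKV
  have hd : (s : Set X).PairwiseDisjoint K := fun x hx y hy hxy ↦
    disjoint_left.2 fun ω hωx hωy ↦ hxy ((hKg x hx hωx).1.symm.trans (hKg y hy hωy).1)
  have hsT : ∀ x ∈ s, x ∈ T := fun x hx ↦
    range_subset_iff.2 hgT (SimpleFunc.mem_range.1 (Finset.mem_of_mem_erase hx))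
  obtain ⟨h, hh, hhT, hhK⟩ := IsCompactPerturbation.exists_eqOn_finset hT ha hsT hK hKcl hd
    (isOpen_biUnion hV)
    fun x hx ↦ ((hKg x hx).trans (hgV x hx)).trans (subset_biUnion_of_mem (u := V) hx)
  refine ⟨h, hh.mono (iUnion₂_subset hVU), hhT, ?_⟩
  have hsub : {ω | g ω ≠ h ω} ∩ U ⊆ ⋃ x ∈ s, V x \ K x :=
    hh.setOf_ne_inter_subset_biUnion_sdiff (s := s) hhK
      (fun ω hω ↦ Finset.mem_erase.2 ⟨hω, g.mem_range_self ω⟩)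
      (fun x hx ↦ (hKg x hx).trans inter_subset_left) hgV
  calc μ.restrict U {ω | g ω ≠ h ω}
      = μ ({ω | g ω ≠ h ω} ∩ U) := Measure.restrict_apply' hU.measurableSet
    _ ≤ μ (⋃ x ∈ s, V x \ K x) := measure_mono hsub
    _ ≤ ∑ x ∈ s, μ (V x \ K x) := measure_biUnion_finset_le _ _
    _ ≤ s.card • ζ := Finset.sum_le_card_nsmul _ _ _ fun x hx ↦ (hμ x hx).le
    _ = ζ * s.card := by rw [nsmul_eq_mul, mul_comm]
    _ < η := hζη

theorem exists_isCompactPerturbation_lintegral_edist_simpleFunc_lt [MetricSpace X]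
    [PathConnectedSpace X] (hU : IsOpen U) (hp : 0 < p) {g : SimpleFunc E X}
    (hg : ∫⁻ ω in U, edist (g ω) a ^ p ∂μ ≠ ∞) {δ : ℝ≥0∞} (hδ : δ ≠ 0) :
    ∃ h, IsCompactPerturbation a U h ∧ ∫⁻ ω in U, edist (g ω) (h ω) ^ p ∂μ < δ := by
  obtain ⟨T, hT, hTc, hTp⟩ := exists_isCompact_isPathConnected_superset_of_finite
    (g.finite_range.insert a)
  have hgT (ω : E) : g ω ∈ T := hT (.inr (mem_range_self ω))
  have hdiam : Metric.ediam T ^ p ≠ ∞ :=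
    ENNReal.rpow_ne_top_of_nonneg hp.le hTc.isBounded.ediam_ne_top
  obtain ⟨η, hη, hηδ⟩ := ENNReal.exists_pos_mul_lt hdiam hδ
  obtain ⟨h, hh, hhT, hμ⟩ := exists_isCompactPerturbation_measure_ne_lt hTp
    (hT (mem_insert a _)) hU hgT
    (fun x ↦ measure_fiber_ne_top_of_lintegral_edist_ne_top hg (g.measurableSet_fiber x)) hη.ne'
  refine ⟨h, hh, ?_⟩
  calc ∫⁻ ω in U, edist (g ω) (h ω) ^ p ∂μ
      ≤ ∫⁻ ω in U, {ω | g ω ≠ h ω}.indicator (fun _ ↦ Metric.ediam T ^ p) ω ∂μ := by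
        refine lintegral_mono fun ω ↦ ?_
        by_cases hω : g ω = h ω
        · simp [hω, ENNReal.zero_rpow_of_pos hp]
        · rw [indicator_of_mem (s := {ω | g ω ≠ h ω}) hω]
          gcongr
          exact Metric.edist_le_ediam_of_mem (hgT ω) (hhT ω)
    _ ≤ Metric.ediam T ^ p * μ.restrict U {ω | g ω ≠ h ω} := lintegral_indicator_const_le _ _
    _ ≤ Metric.ediam T ^ p * η := by gcongr
    _ = η * Metric.ediam T ^ p := mul_comm _ _
    _ < δ := hηδ

theorem exists_isCompactPerturbation_lintegral_edist_lt [MetricSpace X] [PathConnectedSpace X]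
    (hU : IsOpen U) (hp : 0 < p) {f : E → X} (hf : AEStronglyMeasurable f (μ.restrict U))
    (hfa : ∫⁻ ω in U, edist (f ω) a ^ p ∂μ ≠ ∞) {δ : ℝ≥0∞} (hδ : δ ≠ 0) :
    ∃ h, IsCompactPerturbation a U h ∧ ∫⁻ ω in U, edist (f ω) (h ω) ^ p ∂μ < δ := by
  have h2p : (2 : ℝ≥0∞) ^ p ≠ ∞ := ENNReal.rpow_ne_top_of_nonneg hp.le ENNReal.ofNat_ne_top
  obtain ⟨η, hη, hηδ⟩ := ENNReal.exists_pos_mul_lt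
    (ENNReal.mul_ne_top h2p ENNReal.ofNat_ne_top : (2 : ℝ≥0∞) ^ p * 2 ≠ ∞) hδ
  obtain ⟨g, hfg⟩ := exists_simpleFunc_lintegral_edist_lt hp hf hfa hη.ne'
  have hga : ∫⁻ ω in U, edist (g ω) a ^ p ∂μ ≠ ∞ := by
    refine ne_top_of_le_ne_top (ENNReal.mul_ne_top h2p (ENNReal.add_ne_top.2 ⟨?_, hfa⟩))
      (lintegral_edist_rpow_le hp.le g.aestronglyMeasurable hf)
    simpa only [edist_comm] using hfg.ne_top
  obtain ⟨h, hh, hgh⟩ := exists_isCompactPerturbation_lintegral_edist_simpleFunc_lt hU hp hga hη.ne'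
  refine ⟨h, hh, ?_⟩
  calc ∫⁻ ω in U, edist (f ω) (h ω) ^ p ∂μ
      ≤ 2 ^ p * (∫⁻ ω in U, edist (f ω) (g ω) ^ p ∂μ + ∫⁻ ω in U, edist (g ω) (h ω) ^ p ∂μ) :=
        lintegral_edist_rpow_le hp.le hf g.aestronglyMeasurable
    _ ≤ 2 ^ p * (η + η) := by gcongr
    _ = η * (2 ^ p * 2) := by ring
    _ < δ := hηδ

end Approximation

theorem Lp_approx_by_uniformly_continuous_constant_outside_compact_general
    {E X : Type*} [UniformSpace E] [LocallyCompactSpace E] [MeasurableSpace E] [BorelSpace E]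
    {μ : Measure E} [μ.Regular] {U : Set E} (hU : IsOpen U) [MetricSpace X] [PathConnectedSpace X]
    {p : ℝ} (hp : 0 < p) {f : E → X} (hf : AEStronglyMeasurable f (μ.restrict U))
    {a : X} (hfa : ∫⁻ ω in U, ENNReal.ofReal (dist (f ω) a ^ p) ∂μ < ⊤) {ε : ℝ} (hε : 0 < ε) :
    ∃ h : E → X, UniformContinuousOn h U ∧
      (∃ K, IsCompact K ∧ K ⊆ U ∧ ∃ c : X, ∀ x ∈ U \ K, h x = c) ∧
      ∫⁻ ω in U, ENNReal.ofReal (dist (f ω) (h ω) ^ p) ∂μ < ENNReal.ofReal ε := by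
  have hedist (x y : X) : ENNReal.ofReal (dist x y ^ p) = edist x y ^ p := by
    rw [edist_dist, ENNReal.ofReal_rpow_of_nonneg dist_nonneg hp.le]
  simp only [hedist] at hfa ⊢
  obtain ⟨h, hh, hfh⟩ := exists_isCompactPerturbation_lintegral_edist_lt hU hp hf hfa.ne
    (ENNReal.ofReal_pos.2 hε).ne'
  exact ⟨h, hh.uniformContinuous.uniformContinuousOn, ⟨_, hh.isCompact_closure, hh.closure_subset,
    a, fun ω hω ↦ eq_of_notMem_closure_setOf_ne hω.2⟩, hfh⟩

/-- In a locally compact Hadamard space `X`, every `f ∈ L^p(Ω, X)` can be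
approximated arbitrarily well by uniformly continuous maps which are constant outside a
compact subset of `Ω`. -/
theorem Lp_approx_by_uniformly_continuous_constant_outside_compact
    {n : ℕ} (hn : 1 ≤ n)
    (Ω : Set (EuclideanSpace ℝ (Fin n))) (hΩo : IsOpen Ω) (hΩb : Bornology.IsBounded Ω)
    {X : Type*} [MetricSpace X] [CompleteSpace X] [LocallyCompactSpace X]
    [MeasurableSpace X] [BorelSpace X]
    (hgeo : ∀ x y : X, ∃ γ : ℝ → X, γ 0 = x ∧ γ 1 = y ∧
      ∀ s ∈ Icc (0:ℝ) 1, ∀ t ∈ Icc (0:ℝ) 1, dist (γ s) (γ t) = |s - t| * dist x y)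
    (h4 : ∀ x y v w : X, dist x v ^ 2 + dist y w ^ 2 ≤
      dist x w ^ 2 + dist y v ^ 2 + 2 * dist x y * dist v w)
    (p : ℝ) (hp : 1 ≤ p)
    (f : EuclideanSpace ℝ (Fin n) → X) (hf : Measurable f)
    (a : X) (hfa : ∫⁻ ω in Ω, ENNReal.ofReal (dist (f ω) a ^ p) < ⊤)
    (ε : ℝ) (hε : 0 < ε) :
    ∃ h : EuclideanSpace ℝ (Fin n) → X, UniformContinuousOn h Ω ∧
      (∃ K : Set (EuclideanSpace ℝ (Fin n)), IsCompact K ∧ K ⊆ Ω ∧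
        ∃ c : X, ∀ x ∈ Ω \ K, h x = c) ∧
      ∫⁻ ω in Ω, ENNReal.ofReal (dist (f ω) (h ω) ^ p) < ENNReal.ofReal ε := by
  have : PathConnectedSpace X := pathConnectedSpace_of_forall_geodesic ⟨a⟩ hgeo
  have : SigmaCompactSpace X := sigmaCompactSpace_of_preconnectedSpace_of_paracompactSpace
  exact Lp_approx_by_uniformly_continuous_constant_outside_compact_general hΩo
    (zero_lt_one.trans_le hp) hf.aestronglyMeasurable hfa hε
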